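/- arXiv:1108.5930 — 2 statements merged into one kernel-verified Lean document; each statement's English description precedes it below -/
import Mathlib

section
/- Let L be a linear pencil in n variables. Then the spectrahedron S_L is empty if and only if −1 belongs to the quadratic module M_L associated to L. -/
open MvPolynomial Matrix

/-- The linear pencil `L = A 0 + X 1 * A 1 + ... + X n * A n` as a symmetric matrix
with entries in the polynomial ring `ℝ[X 1, ..., X n]`. -/
noncomputable def pencilPoly {n m : ℕ} (A : Fin (n+1) → Matrix (Fin m) (Fin m) ℝ) :
    Matrix (Fin m) (Fin m) (MvPolynomial (Fin n) ℝ) :=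
  fun a b => MvPolynomial.C (A 0 a b) + ∑ i : Fin n, MvPolynomial.X i * MvPolynomial.C (A i.succ a b)

/-- Evaluation of the pencil at a point `x ∈ ℝⁿ`. -/
def pencilEval {n m : ℕ} (A : Fin (n+1) → Matrix (Fin m) (Fin m) ℝ) (x : Fin n → ℝ) :
    Matrix (Fin m) (Fin m) ℝ :=
  A 0 + ∑ i : Fin n, x i • A i.succ

/-- The spectrahedron `S_L = {x ∈ ℝⁿ ∣ L(x) ⪰ 0}`. -/
def specSet {n m : ℕ} (A : Fin (n+1) → Matrix (Fin m) (Fin m) ℝ) : Set (Fin n → ℝ) :=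
  {x | (pencilEval A x).PosSemidef}

/-- `vᵀ L v` for a vector `v` of polynomials. -/
noncomputable def vLv {n m : ℕ} (A : Fin (n+1) → Matrix (Fin m) (Fin m) ℝ)
    (v : Fin m → MvPolynomial (Fin n) ℝ) : MvPolynomial (Fin n) ℝ :=
  ∑ a : Fin m, ∑ b : Fin m, v a * pencilPoly A a b * v b

/-- Membership in the quadratic module `M_L` associated to the pencil `L`:
`p = s + Σⱼ vⱼᵀ L vⱼ` with `s` a sum of squares. -/
def memQM {n m : ℕ} (A : Fin (n+1) → Matrix (Fin m) (Fin m) ℝ)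
    (p : MvPolynomial (Fin n) ℝ) : Prop :=
  ∃ (k r : ℕ) (q : Fin k → MvPolynomial (Fin n) ℝ)
    (v : Fin r → Fin m → MvPolynomial (Fin n) ℝ),
    p = ∑ i, (q i)^2 + ∑ j, vLv A (v j)

/-!
Any point of `S_L` turns `-1 ∈ M_L` into `0 ≤ -1`. Conversely, if `-1 ∉ M_L`, enlarge `M_L` to a
maximal quadratic module `N` with `-1 ∉ N` and look for a linear functional `φ` on `ℝ[X]` with
`φ 1 > 0` and `φ (uᵀ L u) ≥ 0` for all `u ∈ ℝᵐ`; then `(φ X₁ / φ 1, …, φ Xₙ / φ 1) ∈ S_L`. Since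
the convex cone `N` is not closed, `1` need not be separable from `-N`, but maximality makes the
support `N ∩ -N` closed under square roots. Hence the vectors `u` with `uᵀ L u ∈ N ∩ -N` form a
subspace, and on the unit sphere of a complement the forms `uᵀ L u`, together with `1`, are a
compact subset of `N` whose convex hull misses `N ∩ -N`. Hahn–Banach separation applies to it.
-/

section ConvexHull

theorem convexHull_eq_biUnion_image_stdSimplex_prod {𝕜 E : Type*} [Field 𝕜] [LinearOrder 𝕜]
    [IsStrictOrderedRing 𝕜] [AddCommGroup E] [Module 𝕜 E] [FiniteDimensional 𝕜 E] (s : Set E) :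
    convexHull 𝕜 s = ⋃ k ∈ Set.Iic (Module.finrank 𝕜 E + 1),
      (fun p : (Fin k → 𝕜) × (Fin k → E) => ∑ i, p.1 i • p.2 i) ''
        (stdSimplex 𝕜 (Fin k) ×ˢ Set.univ.pi fun _ => s) := by
  refine Set.Subset.antisymm (fun x hx => ?_) (Set.iUnion₂_subset fun k _ => ?_)
  · obtain ⟨ι, _, z, w, hz, hind, hw, hw1, rfl⟩ := eq_pos_convex_span_of_mem_convexHull hx
    have hcard : Fintype.card ι ≤ Module.finrank 𝕜 E + 1 :=
      hind.card_le_finrank_succ.trans (Nat.succ_le_succ (Submodule.finrank_le _))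
    let e := (Fintype.equivFin ι).symm
    refine Set.mem_biUnion hcard
      ⟨(w ∘ e, z ∘ e), ⟨⟨fun i => (hw _).le, ?_⟩, fun i _ => hz ⟨_, rfl⟩⟩, ?_⟩
    · rw [← hw1]
      exact e.sum_comp w
    · exact e.sum_comp fun i => w i • z i
  · rintro _ ⟨⟨w, z⟩, ⟨⟨hw, hw1⟩, hz⟩, rfl⟩
    exact (convex_convexHull 𝕜 s).sum_mem (fun i _ => hw i) hw1
      fun i _ => subset_convexHull 𝕜 s (hz i trivial)

theorem isCompact_convexHull {E : Type*} [AddCommGroup E] [Module ℝ E] [TopologicalSpace E]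
    [ContinuousAdd E] [ContinuousSMul ℝ E] [FiniteDimensional ℝ E] {s : Set E}
    (hs : IsCompact s) : IsCompact (convexHull ℝ s) := by
  rw [convexHull_eq_biUnion_image_stdSimplex_prod]
  exact (Set.finite_Iic _).isCompact_biUnion fun k _ =>
    ((isCompact_stdSimplex ℝ (Fin k)).prod (isCompact_univ_pi fun _ => hs)).image (by fun_prop)

end ConvexHull

section LinearAlgebra

theorem exists_linearMap_pi_inf_ker_le {K E : Type*} [Field K] [AddCommGroup E] [Module K E]
    (P W : Submodule K E) [FiniteDimensional K W] :
    ∃ (d : ℕ) (g : E →ₗ[K] Fin d → K), P ≤ g.ker ∧ W ⊓ g.ker ≤ P := by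
  let W' : Submodule K (E ⧸ P) := W.map P.mkQ
  obtain ⟨π, hπ⟩ := W'.subtype.exists_leftInverse_of_injective W'.ker_subtype
  let e := (Module.finBasis K W').equivFun
  refine ⟨_, e.toLinearMap ∘ₗ π ∘ₗ P.mkQ, fun x hx => ?_, fun x ⟨hx, h0⟩ => ?_⟩
  · simp [(Submodule.Quotient.mk_eq_zero P).2 hx]
  · let x' : W' := ⟨P.mkQ x, Submodule.mem_map_of_mem hx⟩
    have hx' : π (P.mkQ x) = x' := LinearMap.congr_fun hπ x'
    have : x' = 0 := by
      rw [← hx']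
      simpa using h0
    exact (Submodule.Quotient.mk_eq_zero P).1 (congrArg Subtype.val this)

/-- The vectors at which a quadratic map takes values in a submodule `P`. They form a submodule
as soon as each of them lies in the radical of the polar form of `Q` modulo `P`. -/
def isotropicSubmodule {R M E : Type*} [CommRing R] [AddCommGroup M] [Module R M] [AddCommGroup E]
    [Module R E] (Q : QuadraticMap R M E) (P : Submodule R E)
    (hpolar : ∀ u w, Q u ∈ P → QuadraticMap.polar Q u w ∈ P) : Submodule R M where
  carrier := {u | Q u ∈ P}
  zero_mem' := by simp
  add_mem' {u w} hu hw := by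
    change Q (u + w) ∈ P
    rw [QuadraticMap.map_add Q]
    exact P.add_mem (P.add_mem hu hw) (hpolar u w hu)
  smul_mem' c u hu := by
    simpa [Q.map_smul] using P.smul_mem _ hu

end LinearAlgebra

section QuadraticMap

theorem exists_finiteDimensional_quadraticMap_mem {K V E : Type*} [Field K] [Invertible (2 : K)]
    [AddCommGroup V] [Module K V] [FiniteDimensional K V] [AddCommGroup E] [Module K E]
    (Q : QuadraticMap K V E) :
    ∃ W : Submodule K E, FiniteDimensional K W ∧ ∀ u, Q u ∈ W :=
  ⟨(TensorProduct.lift (QuadraticMap.associated (R := K) Q)).range, inferInstance,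
    fun u => ⟨u ⊗ₜ u, QuadraticMap.associated_eq_self_apply K Q u⟩⟩

theorem convex_diff_lineal {𝕜 E : Type*} [Field 𝕜] [LinearOrder 𝕜] [IsStrictOrderedRing 𝕜]
    [AddCommGroup E] [Module 𝕜 E] (C : PointedCone 𝕜 E) : Convex 𝕜 ((C : Set E) \ C.lineal) := by
  rintro x ⟨hx, hx'⟩ y ⟨hy, hy'⟩ a b ha hb hab
  refine ⟨C.convex hx hy ha hb hab, fun hmem => ?_⟩
  have hface := PointedCone.IsFaceOf.lineal C
  rcases ha.eq_or_lt with rfl | ha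
  · exact hy' (by simpa [show b = 1 by linarith] using hmem)
  · exact hx' (hface.mem_of_smul_add_mem hx (C.smul_mem hb hy) ha hmem)

variable {V E : Type*} [AddCommGroup V] [Module ℝ V] [FiniteDimensional ℝ V]
  [AddCommGroup E] [Module ℝ E]

section Topology

variable [TopologicalSpace V] [IsTopologicalAddGroup V] [ContinuousSMul ℝ V] [T2Space V]

theorem continuous_quadraticMap {F : Type*} [AddCommGroup F] [Module ℝ F] [TopologicalSpace F]
    [IsTopologicalAddGroup F] [ContinuousSMul ℝ F] (Q : QuadraticMap ℝ V F) : Continuous Q := by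
  let B := QuadraticMap.associated (R := ℝ) Q
  let b := Module.finBasis ℝ V
  have hQ : ⇑Q = fun u => ∑ i, b.coord i u • B (b i) u := funext fun u => calc
    Q u = B u u := (QuadraticMap.associated_eq_self_apply ℝ Q u).symm
    _ = B (∑ i, b.coord i u • b i) u := by simp only [b.coord_apply, b.sum_repr]
    _ = _ := by simp only [map_sum, map_smul, LinearMap.sum_apply, LinearMap.smul_apply]
  rw [hQ]
  exact continuous_finsetSum _ fun i _ => (b.coord i).continuous_of_finiteDimensional.smul
    (B (b i)).continuous_of_finiteDimensional

theorem exists_dual_pos_of_isCompact (C : PointedCone ℝ E) (Q : QuadraticMap ℝ V E) {S : Set V}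
    (hS : IsCompact S) (hQ : ∀ u ∈ S, Q u ∈ (C : Set E) \ C.lineal) {e : E}
    (he : e ∈ (C : Set E) \ C.lineal) :
    ∃ φ : Module.Dual ℝ E, C.lineal ≤ φ.ker ∧ 0 < φ e ∧ ∀ u ∈ S, 0 < φ (Q u) := by
  obtain ⟨W, _, hW⟩ := exists_finiteDimensional_quadraticMap_mem Q
  obtain ⟨d, g, hg, hgW⟩ := exists_linearMap_pi_inf_ker_le C.lineal (ℝ ∙ e ⊔ W)
  let Γ : Set E := insert e (Q '' S)
  have hΓ : IsCompact (g '' Γ) := by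
    rw [Set.image_insert_eq, Set.image_image]
    exact (hS.image (continuous_quadraticMap (g.compQuadraticMap Q))).insert _
  have hΓC : convexHull ℝ Γ ⊆ (C : Set E) \ C.lineal :=
    convexHull_min (Set.insert_subset he (Set.image_subset_iff.2 hQ)) (convex_diff_lineal C)
  have hΓW : convexHull ℝ Γ ⊆ (ℝ ∙ e ⊔ W : Submodule ℝ E) :=
    convexHull_min (Set.insert_subset (Submodule.mem_sup_left (Submodule.mem_span_singleton_self e))
      (Set.image_subset_iff.2 fun u _ => Submodule.mem_sup_right (hW u))) (Submodule.convex _)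
  have h0 : 0 ∉ convexHull ℝ (g '' Γ) := by
    rw [← LinearMap.image_convexHull]
    rintro ⟨x, hx, hx0⟩
    exact (hΓC hx).2 (hgW ⟨hΓW hx, hx0⟩)
  obtain ⟨f, c, hc, hf⟩ := geometric_hahn_banach_point_closed (convex_convexHull ℝ _)
    (isCompact_convexHull hΓ).isClosed h0
  have hpos : ∀ x ∈ Γ, 0 < f (g x) := fun x hx =>
    (by simpa using hc : 0 < c).trans (hf _ (subset_convexHull ℝ _ (Set.mem_image_of_mem g hx)))
  refine ⟨f.toLinearMap ∘ₗ g, fun x hx => ?_, hpos e (Set.mem_insert _ _),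
    fun u hu => hpos _ (Set.mem_insert_of_mem _ (Set.mem_image_of_mem Q hu))⟩
  simp [LinearMap.mem_ker.1 (hg hx)]

end Topology

theorem exists_dual_nonneg_of_polar_mem_lineal (C : PointedCone ℝ E) (Q : QuadraticMap ℝ V E)
    (hQ : ∀ u, Q u ∈ C) (hpolar : ∀ u w, Q u ∈ C.lineal → QuadraticMap.polar Q u w ∈ C.lineal)
    {e : E} (he : e ∈ (C : Set E) \ C.lineal) :
    ∃ φ : Module.Dual ℝ E, 0 < φ e ∧ ∀ u, 0 ≤ φ (Q u) := by
  let coords := (Module.finBasis ℝ V).equivFun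
  let : NormedAddCommGroup V := NormedAddCommGroup.induced V _ coords coords.injective
  let : NormedSpace ℝ V := NormedSpace.induced ℝ V _ coords
  obtain ⟨K, hK⟩ := (isotropicSubmodule Q C.lineal hpolar).exists_isCompl
  have hanis : ∀ u ∈ Metric.sphere 0 1 ∩ K, Q u ∈ (C : Set E) \ C.lineal := fun u hu =>
    ⟨hQ u, fun hmem => by
      have : u = 0 := Submodule.disjoint_def.1 hK.disjoint u hmem hu.2
      simpa [this] using hu.1⟩
  obtain ⟨φ, hφ, hφe, hφK⟩ := exists_dual_pos_of_isCompact C Q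
    ((isCompact_sphere 0 1).inter_right K.closed_of_finiteDimensional) hanis he
  refine ⟨φ, hφe, fun u => ?_⟩
  obtain ⟨k, hk, w, hw, rfl⟩ := Submodule.mem_sup.1 (hK.sup_eq_top ▸ Submodule.mem_top (x := u))
  have hsplit : φ (Q (k + w)) = φ (Q w) := by
    rw [QuadraticMap.map_add Q, map_add, map_add, hφ hk, hφ (hpolar k w hk), zero_add, add_zero]
  rw [hsplit]
  rcases eq_or_ne w 0 with rfl | hw0
  · simp
  have hpos := hφK (‖w‖⁻¹ • w) ⟨by simp [norm_smul, hw0], K.smul_mem _ hw⟩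
  rw [Q.map_smul, map_smul, smul_eq_mul] at hpos
  exact (pos_of_mul_pos_right hpos (mul_self_nonneg _)).le

end QuadraticMap

section QuadraticModule

-- A quadratic module of `R` is encoded as a module `N` over the sums of squares with `1 ∈ N`.

theorem exists_le_maximal_notMem {S M : Type*} [Semiring S] [AddCommMonoid M] [Module S M]
    {N : Submodule S M} {x : M} (hx : x ∉ N) :
    ∃ N' : Submodule S M, N ≤ N' ∧ Maximal (x ∉ ·) N' := by
  refine zorn_le_nonempty₀ {N' : Submodule S M | x ∉ N'} (fun c hc hchain P hP => ?_) N hx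
  refine ⟨sSup c, fun h => ?_, fun _ => le_sSup⟩
  obtain ⟨P', hP', hxP'⟩ := (Submodule.mem_sSup_of_directed ⟨P, hP⟩ hchain.directedOn).1 h
  exact hc hP' hxP'

variable {R : Type*} [CommRing R] {N : Submodule (Subsemiring.sumSq R) R}

theorem sq_mul_mem (f : R) {a : R} (ha : a ∈ N) : f ^ 2 * a ∈ N :=
  N.smul_mem ⟨f ^ 2, Subsemiring.mem_sumSq.2 (IsSquare.sq f).isSumSq⟩ ha

theorem sq_mem_of_one_mem (h1 : 1 ∈ N) (f : R) : f ^ 2 ∈ N := by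
  simpa using sq_mul_mem f h1

theorem mem_of_neg_sq_mem (h1 : 1 ∈ N) (hN : Maximal (-1 ∉ ·) N) {f : R}
    (hf : -f ^ 2 ∈ N) : f ∈ N := by
  let N' := N ⊔ (Ideal.span {f}).restrictScalars (Subsemiring.sumSq R)
  have hfN' : f ∈ N' := Submodule.mem_sup_right (Ideal.mem_span_singleton_self f)
  refine hN.le_of_ge (fun hneg => hN.prop ?_) le_sup_left hfN'
  obtain ⟨a, ha, b, hb, hab⟩ := Submodule.mem_sup.1 hneg
  obtain ⟨h, rfl⟩ := Ideal.mem_span_singleton.1 hb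
  have hsq := sq_mem_of_one_mem h1 (1 + f * h)
  convert N.add_mem (N.add_mem (N.add_mem ha ha) hsq) (sq_mul_mem h hf) using 1
  linear_combination -2 * hab

theorem mem_of_binary_quadratic_form_mem (h1 : 1 ∈ N) (hN : Maximal (-1 ∉ ·) N) {a b c : R}
    (hform : ∀ p q, p ^ 2 * a + p * q * b + q ^ 2 * c ∈ N) (ha : -a ∈ N) : b ∈ N := by
  refine mem_of_neg_sq_mem h1 hN ?_
  -- At `p = -(1 + c)`, `q = b` the form takes the value `(1 + c) ^ 2 * a - b ^ 2`.
  convert N.add_mem (hform (-(1 + c)) b) (sq_mul_mem (1 + c) ha) using 1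
  ring

/-- A module over the sums of squares of a real algebra, viewed as a convex cone: nonnegative
scalars are squares. -/
def toPointedCone [Algebra ℝ R] (N : Submodule (Subsemiring.sumSq R) R) : PointedCone ℝ R where
  __ := N.toAddSubmonoid
  smul_mem' := by
    rintro ⟨c, hc⟩ a ha
    have h := sq_mul_mem (algebraMap ℝ R √c) ha
    rwa [← map_pow, Real.sq_sqrt hc, ← Algebra.smul_def] at h

@[simp]
theorem mem_toPointedCone [Algebra ℝ R] {a : R} : a ∈ toPointedCone N ↔ a ∈ N :=
  Iff.rfl

end QuadraticModule

section Pencil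

variable {n m : ℕ} {A : Fin (n + 1) → Matrix (Fin m) (Fin m) ℝ}

theorem memQM.add {p p' : MvPolynomial (Fin n) ℝ} (hp : memQM A p) (hp' : memQM A p') :
    memQM A (p + p') := by
  obtain ⟨k, r, q, v, rfl⟩ := hp
  obtain ⟨k', r', q', v', rfl⟩ := hp'
  refine ⟨k + k', r + r', Fin.append q q', Fin.append v v', ?_⟩
  simp only [Fin.sum_univ_add, Fin.append_left, Fin.append_right]
  exact add_add_add_comm _ _ _ _

variable (A) in
theorem vLv_mul (f : MvPolynomial (Fin n) ℝ) (v : Fin m → MvPolynomial (Fin n) ℝ) :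
    vLv A (fun a => f * v a) = f ^ 2 * vLv A v := by
  simp only [vLv, Finset.mul_sum]
  exact Finset.sum_congr rfl fun a _ => Finset.sum_congr rfl fun b _ => by ring

theorem memQM.sq_mul (f : MvPolynomial (Fin n) ℝ) {p : MvPolynomial (Fin n) ℝ}
    (hp : memQM A p) : memQM A (f ^ 2 * p) := by
  obtain ⟨k, r, q, v, rfl⟩ := hp
  refine ⟨k, r, fun i => f * q i, fun j a => f * v j a, ?_⟩
  simp only [mul_add, Finset.mul_sum, mul_pow, vLv_mul]

variable (A)

theorem memQM_zero : memQM A 0 :=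
  ⟨0, 0, Fin.elim0, Fin.elim0, by simp⟩

theorem memQM_one : memQM A 1 :=
  ⟨1, 0, fun _ => 1, Fin.elim0, by simp⟩

theorem memQM_vLv (v : Fin m → MvPolynomial (Fin n) ℝ) : memQM A (vLv A v) :=
  ⟨0, 1, Fin.elim0, fun _ => v, by simp⟩

/-- The quadratic module `M_L` as a module over the sums of squares. -/
def quadraticModule :
    Submodule (Subsemiring.sumSq (MvPolynomial (Fin n) ℝ)) (MvPolynomial (Fin n) ℝ) where
  carrier := {p | memQM A p}
  zero_mem' := memQM_zero A
  add_mem' := memQM.add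
  smul_mem' := by
    rintro ⟨s, hs⟩ p hp
    change memQM A (s * p)
    induction Subsemiring.mem_sumSq.1 hs with
    | zero => simpa using memQM_zero A
    | sq_add f ht ih =>
      simpa [add_mul, sq] using (memQM.sq_mul f hp).add (ih (Subsemiring.mem_sumSq.2 ht))

theorem eval_pencilPoly (x : Fin n → ℝ) (a b : Fin m) :
    eval x (pencilPoly A a b) = pencilEval A x a b := by
  simp [pencilPoly, pencilEval, Matrix.sum_apply]

theorem eval_vLv (x : Fin n → ℝ) (v : Fin m → MvPolynomial (Fin n) ℝ) :
    eval x (vLv A v) =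
      (fun a => eval x (v a)) ⬝ᵥ (pencilEval A x *ᵥ fun a => eval x (v a)) := by
  simp [vLv, eval_pencilPoly, dotProduct, mulVec, Finset.mul_sum, mul_assoc]

variable {A} in
theorem eval_nonneg_of_memQM {x : Fin n → ℝ} (hx : x ∈ specSet A) {p : MvPolynomial (Fin n) ℝ}
    (hp : memQM A p) : 0 ≤ eval x p := by
  obtain ⟨k, r, q, v, rfl⟩ := hp
  have hvLv : ∀ j, 0 ≤ eval x (vLv A (v j)) := fun j => by
    rw [eval_vLv]
    simpa using PosSemidef.dotProduct_mulVec_nonneg hx fun a => eval x (v j a)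
  simp only [map_add, map_sum, map_pow]
  exact add_nonneg (Finset.sum_nonneg fun i _ => sq_nonneg _) (Finset.sum_nonneg fun j _ => hvLv j)

/-- The quadratic map `u ↦ uᵀ L u` from `ℝᵐ` to the (affine) polynomials. -/
noncomputable def pencilForm : QuadraticMap ℝ (Fin m → ℝ) (MvPolynomial (Fin n) ℝ) :=
  LinearMap.BilinMap.toQuadraticMap (Matrix.toLinearMap₂' ℝ (pencilPoly A) :
    (Fin m → ℝ) →ₗ[ℝ] (Fin m → ℝ) →ₗ[ℝ] MvPolynomial (Fin n) ℝ)

theorem vLv_mul_C_add_mul_C (p q : MvPolynomial (Fin n) ℝ) (u w : Fin m → ℝ) :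
    vLv A (fun a => p * C (u a) + q * C (w a)) =
      p ^ 2 * pencilForm A u + p * q * QuadraticMap.polar (pencilForm A) u w +
        q ^ 2 * pencilForm A w := by
  simp only [pencilForm, LinearMap.BilinMap.polar_toQuadraticMap,
    LinearMap.BilinMap.toQuadraticMap_apply, Matrix.toLinearMap₂'_apply, vLv, smul_eq_C_mul,
    Finset.mul_sum, ← Finset.sum_add_distrib]
  exact Finset.sum_congr rfl fun a _ => Finset.sum_congr rfl fun b _ => by ring

theorem pencilForm_eq_vLv (u : Fin m → ℝ) : pencilForm A u = vLv A (fun a => C (u a)) := by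
  simpa using (vLv_mul_C_add_mul_C A 1 0 u 0).symm

variable {A}

theorem map_pencilPoly (φ : Module.Dual ℝ (MvPolynomial (Fin n) ℝ)) (h1 : φ 1 ≠ 0) (a b : Fin m) :
    φ (pencilPoly A a b) = φ 1 * pencilEval A (fun i => φ (X i) / φ 1) a b := by
  have hC : ∀ c : ℝ, φ (C c) = φ 1 * c := fun c => by
    rw [← mul_one (C c), ← smul_eq_C_mul, map_smul, smul_eq_mul, mul_comm]
  have hX : ∀ (i : Fin n) (c : ℝ), φ (X i * C c) = φ 1 * (φ (X i) / φ 1 * c) := fun i c => by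
    rw [mul_comm, ← smul_eq_C_mul, map_smul, smul_eq_mul]
    field_simp
  simp [pencilPoly, pencilEval, Matrix.sum_apply, hC, hX, mul_add, Finset.mul_sum]

theorem isHermitian_pencilEval (hsymm : ∀ i, (A i).IsSymm) (x : Fin n → ℝ) :
    (pencilEval A x).IsHermitian := by
  simp [IsHermitian, pencilEval, transpose_sum, (hsymm _).eq]

theorem mem_specSet_of_dual (hsymm : ∀ i, (A i).IsSymm)
    (φ : Module.Dual ℝ (MvPolynomial (Fin n) ℝ)) (h1 : 0 < φ 1)
    (hφ : ∀ u, 0 ≤ φ (pencilForm A u)) : (fun i => φ (X i) / φ 1) ∈ specSet A := by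
  refine PosSemidef.of_dotProduct_mulVec_nonneg (isHermitian_pencilEval hsymm _) fun u => ?_
  refine nonneg_of_mul_nonneg_right ((hφ u).trans_eq ?_) h1
  simp only [pencilForm, LinearMap.BilinMap.toQuadraticMap_apply, Matrix.toLinearMap₂'_apply,
    map_sum, map_smul, map_pencilPoly φ h1.ne', smul_eq_mul, dotProduct, mulVec, star_trivial,
    Finset.mul_sum]
  exact Finset.sum_congr rfl fun a _ => Finset.sum_congr rfl fun b _ => by ring

theorem polar_pencilForm_mem
    {N : Submodule (Subsemiring.sumSq (MvPolynomial (Fin n) ℝ)) (MvPolynomial (Fin n) ℝ)}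
    (hle : quadraticModule A ≤ N) (hN : Maximal (-1 ∉ ·) N) {u : Fin m → ℝ}
    (hu : -pencilForm A u ∈ N) (w : Fin m → ℝ) : QuadraticMap.polar (pencilForm A) u w ∈ N := by
  refine mem_of_binary_quadratic_form_mem (c := pencilForm A w) (hle (memQM_one A)) hN
    (fun p q => ?_) hu
  rw [← vLv_mul_C_add_mul_C]
  exact hle (memQM_vLv A _)

theorem specSet_nonempty_of_not_memQM_neg_one (hsymm : ∀ i, (A i).IsSymm)
    (h : ¬ memQM A (-1)) : (specSet A).Nonempty := by
  obtain ⟨N, hle, hN⟩ := exists_le_maximal_notMem (N := quadraticModule A) h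
  have hform : ∀ u, pencilForm A u ∈ toPointedCone N := fun u => by
    rw [mem_toPointedCone, pencilForm_eq_vLv]
    exact hle (memQM_vLv A _)
  have hpolar : ∀ u w, pencilForm A u ∈ (toPointedCone N).lineal →
      QuadraticMap.polar (pencilForm A) u w ∈ (toPointedCone N).lineal := fun u w hu =>
    ⟨polar_pencilForm_mem hle hN hu.2 w, by
      simpa using polar_pencilForm_mem hle hN hu.2 (-w)⟩
  obtain ⟨φ, hφ1, hφ⟩ := exists_dual_nonneg_of_polar_mem_lineal (toPointedCone N) (pencilForm A)
    hform hpolar (e := 1) ⟨hle (memQM_one A), fun h1 => hN.prop h1.2⟩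
  exact ⟨_, mem_specSet_of_dual hsymm φ hφ1 hφ⟩

end Pencil

/-- **Theorem (infeasibility certificate).** For a linear pencil `L`, the spectrahedron `S_L`
is empty if and only if `-1 ∈ M_L`. -/
theorem spectrahedron_empty_iff_neg_one_mem_quadraticModule
    (n m : ℕ) (A : Fin (n+1) → Matrix (Fin m) (Fin m) ℝ)
    (hsymm : ∀ i, (A i).IsSymm) :
    specSet A = ∅ ↔ memQM A (-1) := by
  refine ⟨fun hempty => ?_, fun hneg => ?_⟩
  · by_contra h
    exact (specSet_nonempty_of_not_memQM_neg_one hsymm h).ne_empty hempty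
  · refine Set.eq_empty_of_forall_notMem fun x hx => ?_
    have : (0 : ℝ) ≤ eval x (-1) := eval_nonneg_of_memQM hx hneg
    norm_num at this
end

section
/- (Bohnenblust's lemma.) For real symmetric m×m matrices A₁,…,Aₙ the following are equivalent: (i) whenever u₁,…,uₘ ∈ ℝᵐ satisfy Σᵢ₌₁ᵐ uᵢᵀ Aⱼ uᵢ = 0 for all j ∈ {1,…,n}, then u₁ = ⋯ = uₘ = 0; (ii) the linear span of A₁,…,Aₙ contains a positive definite matrix. -/
open Matrix

/-!
By Gram factorisation, condition (i) says that no nonzero positive semidefinite matrix is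
orthogonal, for the trace pairing, to the span `S` of the `A j`, while a Hermitian matrix is
positive definite iff it pairs positively with every nonzero positive semidefinite matrix. After
normalising the trace, the positive semidefinite matrices involved form a compact convex set
(compact because it is the image of a Frobenius sphere under `W ↦ W * Wᴴ`), on which a
Hahn–Banach separation produces one element of `S` whose pairing is positive throughout.
-/

namespace Bohnenblust

section Separation

variable {E F : Type*} [AddCommGroup E] [Module ℝ E] [TopologicalSpace E] [AddCommGroup F]
  [Module ℝ F]

theorem exists_mem_forall_pos_of_forall_exists_mem_ne_zero {K : Set E} (hK : IsCompact K)
    (hconv : Convex ℝ K) (B : F →ₗ[ℝ] E →ₗ[ℝ] ℝ) (S : Submodule ℝ F)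
    (hB : ∀ y ∈ S, Continuous (B y)) (h : ∀ x ∈ K, ∃ y ∈ S, B y x ≠ 0) :
    ∃ y ∈ S, ∀ x ∈ K, 0 < B y x := by
  classical
  -- Finitely many functionals suffice, so the separation takes place in finite dimension and `E`
  -- need not be locally convex.
  obtain ⟨t, ht⟩ := hK.elim_finite_subcover (fun y : S => {x | B y x ≠ 0})
    (fun y => isOpen_ne_fun (hB y y.2) continuous_const) fun x hx => by simpa using h x hx
  let Φ : E →ₗ[ℝ] (t → ℝ) := LinearMap.pi fun y => B y.1
  have hΦ : Continuous Φ := continuous_pi fun y => hB y.1 y.1.2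
  have hzero : 0 ∉ Φ '' K := by
    rintro ⟨x, hx, hΦx⟩
    obtain ⟨y, hy, hne⟩ := Set.mem_iUnion₂.mp (ht hx)
    exact hne (congrFun hΦx ⟨y, hy⟩)
  obtain ⟨f, r, hr, hf⟩ := geometric_hahn_banach_point_closed (hconv.linear_image Φ)
    (hK.image hΦ).isClosed hzero
  refine ⟨∑ y : t, f (Pi.single y 1) • (y.1 : F),
    S.sum_mem fun y _ => S.smul_mem _ y.1.2, fun x hx => ?_⟩
  calc
    0 < f (Φ x) := (map_zero f ▸ hr).trans (hf _ ⟨x, hx, rfl⟩)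
    _ = B (∑ y : t, f (Pi.single y 1) • (y.1 : F)) x := by
      rw [← Finset.univ_sum_single (Φ x)]
      simp only [map_sum, map_smul, LinearMap.sum_apply, LinearMap.smul_apply, smul_eq_mul]
      refine Finset.sum_congr rfl fun y _ => ?_
      rw [mul_comm, ← smul_eq_mul, ← map_smul, ← Pi.single_smul, smul_eq_mul, mul_one]
      rfl

end Separation

theorem isHermitian_of_mem_span {ι m R α : Type*} [Semiring R] [StarMul R] [TrivialStar R]
    [AddCommGroup α] [StarAddMonoid α] [Module R α] [StarModule R α] {A : ι → Matrix m m α}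
    (hA : ∀ j, (A j).IsHermitian) {M : Matrix m m α}
    (hM : M ∈ Submodule.span R (Set.range A)) : M.IsHermitian :=
  Submodule.span_le (p := selfAdjoint.submodule R (Matrix m m α)).mpr
    (Set.range_subset_iff.mpr hA) hM

theorem trace_mul_mul_conjTranspose {m k R : Type*} [Fintype m] [Fintype k] [CommSemiring R]
    [StarRing R] (M : Matrix m m R) (W : Matrix m k R) :
    (M * (W * Wᴴ)).trace = ∑ i, star (W.col i) ⬝ᵥ M *ᵥ W.col i := by
  rw [← Matrix.mul_assoc, trace_mul_comm]
  rfl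

open scoped ComplexOrder

variable {m k 𝕜 : Type*} [Fintype m] [Fintype k] [RCLike 𝕜]

theorem posSemidef_iff_exists_eq_mul_conjTranspose {P : Matrix m m 𝕜} :
    P.PosSemidef ↔ ∃ W : Matrix m m 𝕜, P = W * Wᴴ := by
  classical
  open scoped MatrixOrder in
  rw [← nonneg_iff_posSemidef]
  exact CStarAlgebra.nonneg_iff_eq_mul_star_self

open scoped Matrix.Norms.Frobenius in
theorem trace_mul_conjTranspose_eq_frobenius_norm_sq (W : Matrix m k 𝕜) :
    (W * Wᴴ).trace = ((‖W‖ ^ 2 : ℝ) : 𝕜) := by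
  rw [frobenius_norm_def, ← Real.sqrt_eq_rpow, Real.sq_sqrt (by positivity)]
  simp [trace, mul_apply, RCLike.mul_conj]

variable (m 𝕜) in
/-- The density matrices of quantum theory, i.e. the positive semidefinite matrices of trace one;
they form a compact convex base of the cone of positive semidefinite matrices. -/
def densityMatrices : Set (Matrix m m 𝕜) :=
  {P | P.PosSemidef ∧ P.trace = 1}

open scoped Matrix.Norms.Frobenius in
theorem densityMatrices_eq_image_sphere :
    densityMatrices m 𝕜 = (fun W : Matrix m m 𝕜 => W * Wᴴ) '' Metric.sphere 0 1 := by
  have htrace (W : Matrix m m 𝕜) : (W * Wᴴ).trace = 1 ↔ ‖W‖ = 1 := by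
    rw [trace_mul_conjTranspose_eq_frobenius_norm_sq, ← RCLike.ofReal_one, RCLike.ofReal_inj,
      pow_eq_one_iff_of_nonneg (norm_nonneg W) two_ne_zero]
  ext P
  constructor
  · rintro ⟨hP, htr⟩
    obtain ⟨W, rfl⟩ := posSemidef_iff_exists_eq_mul_conjTranspose.mp hP
    exact ⟨W, mem_sphere_zero_iff_norm.mpr ((htrace W).mp htr), rfl⟩
  · rintro ⟨W, hW, rfl⟩
    exact ⟨posSemidef_self_mul_conjTranspose W, (htrace W).mpr (mem_sphere_zero_iff_norm.mp hW)⟩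

variable (m 𝕜) in
theorem isCompact_densityMatrices : IsCompact (densityMatrices m 𝕜) := by
  rw [densityMatrices_eq_image_sphere]
  have hcont : Continuous fun W : Matrix m m 𝕜 => W * Wᴴ := by fun_prop
  -- The Frobenius topology is definitionally the entrywise one, in which `hcont` is stated.
  open scoped Matrix.Norms.Frobenius in
  have : ProperSpace (Matrix m m 𝕜) := FiniteDimensional.proper_rclike 𝕜 _
  exact (isCompact_sphere 0 1).image hcont

variable (m 𝕜) in
theorem convex_densityMatrices : Convex ℝ (densityMatrices m 𝕜) := by
  rintro P ⟨hP, hPtr⟩ Q ⟨hQ, hQtr⟩ a b ha hb hab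
  refine ⟨(hP.smul ha).add (hQ.smul hb), ?_⟩
  rw [trace_add, trace_smul, trace_smul, hPtr, hQtr, ← add_smul, hab, one_smul]

theorem exists_pos_smul_mem_densityMatrices {P : Matrix m m 𝕜} (hP : P.PosSemidef)
    (hne : P ≠ 0) : ∃ a : ℝ, 0 < a ∧ a • P ∈ densityMatrices m 𝕜 := by
  obtain ⟨t, ht, htr⟩ := RCLike.nonneg_iff_exists_ofReal.mp hP.trace_nonneg
  have htne : t ≠ 0 := by
    rintro rfl
    exact hne (hP.trace_eq_zero_iff.mp (by simpa using htr.symm))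
  refine ⟨t⁻¹, by positivity, hP.smul (by positivity), ?_⟩
  rw [trace_smul, ← htr, RCLike.real_smul_eq_coe_mul, ← RCLike.ofReal_mul, inv_mul_cancel₀ htne,
    RCLike.ofReal_one]

variable (m 𝕜) in
/-- The trace pairing `(M, P) ↦ re tr (M P)`, as a real bilinear form. Taking the real part makes
it real-valued on all matrices over `𝕜` and loses nothing when `M` and `P` are Hermitian. -/
noncomputable def reTraceForm : Matrix m m 𝕜 →ₗ[ℝ] Matrix m m 𝕜 →ₗ[ℝ] ℝ :=
  (LinearMap.mul ℝ (Matrix m m 𝕜)).compr₂ (RCLike.reLm ∘ₗ traceLinearMap m ℝ 𝕜)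

theorem reTraceForm_apply (M P : Matrix m m 𝕜) :
    reTraceForm m 𝕜 M P = RCLike.re (M * P).trace :=
  rfl

theorem reTraceForm_mul_conjTranspose (M : Matrix m m 𝕜) (W : Matrix m k 𝕜) :
    reTraceForm m 𝕜 M (W * Wᴴ) = ∑ i, RCLike.re (star (W.col i) ⬝ᵥ M *ᵥ W.col i) := by
  rw [reTraceForm_apply, trace_mul_mul_conjTranspose, map_sum]

theorem continuous_reTraceForm (M : Matrix m m 𝕜) : Continuous (reTraceForm m 𝕜 M) := by
  simp only [funext (reTraceForm_apply M)]
  fun_prop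

theorem posDef_iff_forall_posSemidef_reTraceForm_pos {M : Matrix m m 𝕜} (hM : M.IsHermitian) :
    M.PosDef ↔ ∀ P : Matrix m m 𝕜, P.PosSemidef → P ≠ 0 → 0 < reTraceForm m 𝕜 M P := by
  constructor
  · intro hpos P hP hne
    obtain ⟨W, rfl⟩ := posSemidef_iff_exists_eq_mul_conjTranspose.mp hP
    obtain ⟨i, hi⟩ : ∃ i, W.col i ≠ 0 := by
      by_contra! hzero
      exact hne (by simp [transpose_eq_zero.mp (funext hzero)])
    rw [reTraceForm_mul_conjTranspose]
    exact Finset.sum_pos' (fun i _ => hpos.posSemidef.re_dotProduct_nonneg _)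
      ⟨i, Finset.mem_univ i, hpos.re_dotProduct_pos hi⟩
  · intro h
    refine .of_dotProduct_mulVec_pos hM fun x hx => RCLike.pos_iff.mpr ⟨?_, ?_⟩
    · simpa [reTraceForm_apply, mul_vecMulVec, trace_vecMulVec, dotProduct_comm] using
        h _ (posSemidef_vecMulVec_self_star x) (vecMulVec_ne_zero hx (star_ne_zero.mpr hx))
    · exact hM.im_star_dotProduct_mulVec_self x

theorem exists_mem_posDef_iff_forall_posSemidef {S : Submodule ℝ (Matrix m m 𝕜)}
    (hS : ∀ M ∈ S, M.IsHermitian) :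
    (∃ M ∈ S, M.PosDef) ↔
      ∀ P : Matrix m m 𝕜, P.PosSemidef → (∀ M ∈ S, reTraceForm m 𝕜 M P = 0) → P = 0 := by
  constructor
  · rintro ⟨M, hMS, hM⟩ P hP horth
    by_contra hne
    exact ((posDef_iff_forall_posSemidef_reTraceForm_pos hM.isHermitian).mp hM P hP hne).ne'
      (horth M hMS)
  · intro h
    have hsep : ∀ P ∈ densityMatrices m 𝕜, ∃ M ∈ S, reTraceForm m 𝕜 M P ≠ 0 := by
      rintro P ⟨hP, htr⟩
      by_contra! horth
      simp [h P hP horth] at htr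
    obtain ⟨M, hMS, hM⟩ := exists_mem_forall_pos_of_forall_exists_mem_ne_zero
      (isCompact_densityMatrices m 𝕜) (convex_densityMatrices m 𝕜) (reTraceForm m 𝕜) S
      (fun M _ => continuous_reTraceForm M) hsep
    refine ⟨M, hMS, (posDef_iff_forall_posSemidef_reTraceForm_pos (hS M hMS)).mpr
      fun P hP hne => ?_⟩
    obtain ⟨a, ha, haP⟩ := exists_pos_smul_mem_densityMatrices hP hne
    have hpos : 0 < a * reTraceForm m 𝕜 M P := by simpa using hM _ haP
    exact pos_of_mul_pos_right hpos ha.le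

theorem reTraceForm_mul_conjTranspose_eq_zero_iff {M : Matrix m m 𝕜} (hM : M.IsHermitian)
    (W : Matrix m k 𝕜) :
    reTraceForm m 𝕜 M (W * Wᴴ) = 0 ↔ ∑ i, star (W.col i) ⬝ᵥ M *ᵥ W.col i = 0 := by
  have him : RCLike.im (∑ i, star (W.col i) ⬝ᵥ M *ᵥ W.col i) = 0 := by
    rw [map_sum]
    exact Finset.sum_eq_zero fun i _ => hM.im_star_dotProduct_mulVec_self _
  rw [reTraceForm_mul_conjTranspose, ← map_sum, RCLike.ext_iff (z := ∑ i, _), him]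
  simp

end Bohnenblust

open Bohnenblust in
open scoped ComplexOrder in
theorem bohnenblust_general {ι m 𝕜 : Type*} [Fintype m] [RCLike 𝕜] (A : ι → Matrix m m 𝕜)
    (hA : ∀ j, (A j).IsHermitian) :
    (∀ u : m → m → 𝕜, (∀ j, ∑ i, star (u i) ⬝ᵥ A j *ᵥ u i = 0) → ∀ i, u i = 0) ↔
      ∃ M ∈ Submodule.span ℝ (Set.range A), M.PosDef := by
  have horth (P : Matrix m m 𝕜) : (∀ M ∈ Submodule.span ℝ (Set.range A),
      reTraceForm m 𝕜 M P = 0) ↔ ∀ j, reTraceForm m 𝕜 (A j) P = 0 :=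
    (Submodule.span_le (p := ((reTraceForm m 𝕜).flip P).ker)).trans Set.range_subset_iff
  rw [exists_mem_posDef_iff_forall_posSemidef fun M => isHermitian_of_mem_span hA]
  simp only [horth, posSemidef_iff_exists_eq_mul_conjTranspose, forall_exists_index]
  constructor
  · rintro h _ W rfl hW
    rw [self_mul_conjTranspose_eq_zero]
    exact transpose_eq_zero.mp <| funext <| h W.col fun j =>
      (reTraceForm_mul_conjTranspose_eq_zero_iff (hA j) W).mp (hW j)
  · intro h u hu
    have hW := h _ (of u)ᵀ rfl fun j =>
      (reTraceForm_mul_conjTranspose_eq_zero_iff (hA j) (of u)ᵀ).mpr (hu j)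
    exact congrFun (transpose_eq_zero.mp (self_mul_conjTranspose_eq_zero.mp hW))

/-- **Bohnenblust's lemma.** For real symmetric `m × m` matrices `A₁, …, Aₙ`, the following
are equivalent: (i) whenever `u₁, …, uₘ ∈ ℝᵐ` satisfy `Σᵢ uᵢᵀ Aⱼ uᵢ = 0` for all `j`, then
all `uᵢ = 0`; (ii) the span of `A₁, …, Aₙ` contains a positive definite matrix. -/
theorem bohnenblust (n m : ℕ) (A : Fin n → Matrix (Fin m) (Fin m) ℝ)
    (hsymm : ∀ j, (A j).IsSymm) :
    (∀ u : Fin m → (Fin m → ℝ),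
        (∀ j, ∑ i, u i ⬝ᵥ (A j).mulVec (u i) = 0) → ∀ i, u i = 0)
    ↔ (∃ c : Fin n → ℝ, (∑ j, c j • A j).PosDef) := by
  simpa [Submodule.mem_span_range_iff_exists_fun] using bohnenblust_general A hsymm
end
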